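/- Abelian criterion for the circle: Let g₁, g₂, …, g_k be orientation-preserving C² diffeomorphisms of the circle S¹ = ℝ/ℤ, each of which is fully supported (Fix(g_i) has empty interior) and each of which has at least one fixed point. Suppose the commutativity graph of {g₁, …, g_k} is connected: the graph with vertex set {1,…,k} and an edge between i and j whenever g_i ∘ g_j = g_j ∘ g_i is connected. Then the subgroup of Diff²₊(S¹) generated by g₁, …, g_k is abelian. -/

import Mathlib

/-- A permutation of `S¹ = ℝ/ℤ` representing an orientation-preserving C²
diffeomorphism of the circle: it is induced by a C² map `F : ℝ → ℝ` with everywhere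
positive derivative satisfying `F (x+1) = F x + 1`. -/
def IsDiffCircle (f : Equiv.Perm (AddCircle (1 : ℝ))) : Prop :=
  ∃ F : ℝ → ℝ, ContDiff ℝ 2 F ∧ (∀ x, 0 < deriv F x) ∧
    (∀ x, F (x + 1) = F x + 1) ∧ ∀ x : ℝ, f ↑x = ↑(F x)

/-!
Each `g i` has a lift to the line with a fixed point, and commutation passes to these lifts. Let `G`
be one of them. By Kopell's lemma, a `C¹` diffeomorphism which commutes with `G` and has a fixed
point in a component `(a, b)` of the complement of `Fix G` is the identity on `(a, b)`. Hence two
commuting fully supported lifts have the same fixed points, and the lifts commuting with `G` act on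
`(a, b)` through a group acting freely. Such a group is abelian by Hölder's theorem, so two
generators commuting with a third commute with each other, and commutation spreads along the paths
of the commutativity graph.
-/

open Set Filter Topology

section Archimedean

variable {G : Type*} [Group G] [LinearOrder G] [MulLeftMono G] [MulRightMono G]

theorem exists_zpow_le_and_lt_zpow {d : G} (hd : 1 < d) (harch : ∀ u : G, ∃ n : ℕ, u ≤ d ^ n)
    (u : G) : ∃ m : ℤ, d ^ m ≤ u ∧ u < d ^ (m + 1) := by
  have hmono : StrictMono fun m : ℤ ↦ d ^ m := strictMono_int_of_lt_succ fun m ↦ by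
    simpa only [zpow_add_one] using lt_mul_of_one_lt_right' (d ^ m) hd
  obtain ⟨n, hn⟩ := harch u
  obtain ⟨k, hk⟩ := harch u⁻¹
  have hbdd : ∃ b : ℤ, ∀ m : ℤ, d ^ m ≤ u → m ≤ b :=
    ⟨n, fun m hm ↦ hmono.le_iff_le.1 (hm.trans (by simpa using hn))⟩
  have hne : ∃ m : ℤ, d ^ m ≤ u := ⟨-k, by simpa using inv_le_of_inv_le' hk⟩
  obtain ⟨m, hm, hmax⟩ := Int.exists_greatest_of_bdd hbdd hne
  exact ⟨m, hm, lt_of_not_ge fun h ↦ (lt_add_one m).not_ge (hmax _ h)⟩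

theorem mem_zpowers_of_isLeast_one_lt {c : G} (hc : IsLeast {x : G | 1 < x} c)
    (harch : ∀ u : G, ∃ n : ℕ, u ≤ c ^ n) (u : G) : u ∈ Subgroup.zpowers c := by
  obtain ⟨m, hle, hlt⟩ := exists_zpow_le_and_lt_zpow hc.1 harch u
  refine ⟨m, hle.antisymm (not_lt.1 fun h ↦ hlt.not_ge ?_)⟩
  rw [zpow_add_one]
  exact le_inv_mul_iff_mul_le.1 (hc.2 (lt_inv_mul_iff_mul_lt.2 (by simpa using h)))

theorem exists_one_lt_mul_self_le (h : ¬ ∃ c : G, IsLeast {x : G | 1 < x} c) {c : G} (hc : 1 < c) :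
    ∃ d, 1 < d ∧ d * d ≤ c := by
  obtain ⟨e, he, hec⟩ : ∃ e, 1 < e ∧ e < c := by
    by_contra! hmin
    exact h ⟨c, hc, hmin⟩
  have hf : 1 < c * e⁻¹ := lt_mul_inv_iff_mul_lt.2 (by simpa using hec)
  refine ⟨min e (c * e⁻¹), lt_min he hf, ?_⟩
  calc min e (c * e⁻¹) * min e (c * e⁻¹) ≤ c * e⁻¹ * e :=
        mul_le_mul' (min_le_right _ _) (min_le_left _ _)
    _ = c := by group

theorem mul_lt_mul_self_mul_mul {d : G} (hd : 1 < d) (harch : ∀ u : G, ∃ n : ℕ, u ≤ d ^ n)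
    (u v : G) : u * v < d * d * (v * u) := by
  obtain ⟨m, hmu, hum⟩ := exists_zpow_le_and_lt_zpow hd harch u
  obtain ⟨n, hnv, hvn⟩ := exists_zpow_le_and_lt_zpow hd harch v
  calc u * v < d ^ (m + 1) * d ^ (n + 1) := mul_lt_mul_of_lt_of_lt hum hvn
    _ = d * d * (d ^ n * d ^ m) := by group
    _ ≤ d * d * (v * u) := by gcongr

/-- Hölder's theorem. -/
theorem commute_of_forall_exists_le_pow (harch : ∀ d : G, 1 < d → ∀ u : G, ∃ n : ℕ, u ≤ d ^ n)
    (u v : G) : Commute u v := by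
  by_cases h : ∃ c : G, IsLeast {x : G | 1 < x} c
  · obtain ⟨c, hc⟩ := h
    obtain ⟨m, rfl⟩ := mem_zpowers_of_isLeast_one_lt hc (harch c hc.1) u
    obtain ⟨n, rfl⟩ := mem_zpowers_of_isLeast_one_lt hc (harch c hc.1) v
    exact (Commute.refl c).zpow_zpow m n
  · have hle : ∀ u v : G, u * v ≤ v * u := by
      intro u v
      by_contra! hlt
      obtain ⟨d, hd, hdd⟩ := exists_one_lt_mul_self_le h
        (c := u * v * (v * u)⁻¹) (lt_mul_inv_iff_mul_lt.2 (by simpa using hlt))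
      exact (mul_lt_mul_self_mul_mul hd (harch d hd) u v).not_ge (le_mul_inv_iff_mul_le.1 hdd)
    exact (hle u v).antisymm (hle v u)

end Archimedean

section Restriction

variable {X : Type*} [Preorder X]

/-- The group of order automorphisms of `s` which extend to an element of `Γ`. -/
def restrictionGroup (Γ : Subgroup (X ≃o X)) (s : Set X) : Subgroup (s ≃o s) where
  carrier := {w | ∃ u ∈ Γ, ∀ x : s, (w x : X) = u x}
  one_mem' := ⟨1, Γ.one_mem, fun _ ↦ rfl⟩
  mul_mem' := by
    rintro w₁ w₂ ⟨u₁, hu₁, h₁⟩ ⟨u₂, hu₂, h₂⟩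
    exact ⟨u₁ * u₂, Γ.mul_mem hu₁ hu₂, fun x ↦ by
      rw [RelIso.mul_apply, RelIso.mul_apply, h₁, h₂]⟩
  inv_mem' := by
    rintro w ⟨u, hu, h⟩
    refine ⟨u⁻¹, Γ.inv_mem hu, fun x ↦ u.injective ?_⟩
    rw [RelIso.apply_inv_self, ← h, RelIso.apply_inv_self]

/-- The restriction to `(a, b)` of an order automorphism fixing `a` and `b`. -/
def restrictIoo (u : X ≃o X) {a b : X} (ha : u a = a) (hb : u b = b) : Ioo a b ≃o Ioo a b where
  toEquiv := u.toEquiv.subtypeEquiv fun x ↦ by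
    rw [RelIso.coe_fn_toEquiv, mem_Ioo, mem_Ioo, ← u.lt_iff_lt, ← u.lt_iff_lt (y := b), ha, hb]
  map_rel_iff' := u.le_iff_le

end Restriction

section FreeAction

variable {X : Type*} [ConditionallyCompleteLinearOrder X] [TopologicalSpace X]
  [OrderTopology X]

theorem exists_lt_pow_apply {d : X ≃o X} (hd : ∀ x, d x ≠ x) {x : X} (hx : x < d x) (y : X) :
    ∃ n : ℕ, y < (d ^ n) x := by
  by_contra! hle
  have hmono : Monotone fun n ↦ d^[n] x := d.monotone.monotone_iterate_of_le_map hx.le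
  have hbdd : BddAbove (range fun n ↦ d^[n] x) := ⟨y, forall_mem_range.2 fun n ↦ by
    simpa only [← hom_coe_pow (fun u : X ≃o X ↦ ⇑u) rfl (fun _ _ ↦ rfl)] using hle n⟩
  exact hd _ (isFixedPt_of_tendsto_iterate (tendsto_atTop_ciSup hmono hbdd)
    d.continuous.continuousAt)

variable [DenselyOrdered X] {Γ : Subgroup (X ≃o X)}

theorem lt_of_free_of_lt (hfree : ∀ u ∈ Γ, ∀ x, u x = x → u = 1) {u v : X ≃o X} (hu : u ∈ Γ)
    (hv : v ∈ Γ) {x : X} (h : u x < v x) (y : X) : u y < v y := by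
  by_contra! hle
  obtain ⟨z, -, hz⟩ := isPreconnected_univ.intermediate_value₂ (mem_univ x) (mem_univ y)
    u.continuous.continuousOn v.continuous.continuousOn h.le hle
  have huv : v⁻¹ * u = 1 := hfree _ (Γ.mul_mem (Γ.inv_mem hv) hu) z (by
    rw [RelIso.mul_apply, hz, RelIso.inv_apply_self])
  exact h.ne (by rw [inv_mul_eq_one.1 huv])

theorem commute_of_free (hfree : ∀ u ∈ Γ, ∀ x, u x = x → u = 1) {u v : X ≃o X}
    (hu : u ∈ Γ) (hv : v ∈ Γ) : Commute u v := by
  rcases isEmpty_or_nonempty X with hX | ⟨⟨x₀⟩⟩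
  · exact RelIso.ext fun x ↦ hX.elim x
  let orbit : Γ → X := fun w ↦ (w : X ≃o X) x₀
  have orbit_injective : orbit.Injective := fun w₁ w₂ h ↦ Subtype.ext <| by
    refine (inv_mul_eq_one.1 (hfree _ (Γ.mul_mem (Γ.inv_mem w₂.2) w₁.2) x₀ ?_)).symm
    rw [RelIso.mul_apply, show (w₁ : X ≃o X) x₀ = (w₂ : X ≃o X) x₀ from h, RelIso.inv_apply_self]
  let _ : LinearOrder Γ := LinearOrder.lift' orbit orbit_injective
  have _ : MulLeftMono Γ := ⟨fun w _ _ h ↦ (w : X ≃o X).monotone h⟩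
  have _ : MulRightStrictMono Γ := ⟨fun w _ _ h ↦
    lt_of_free_of_lt hfree (Subtype.prop _) (Subtype.prop _) h ((w : X ≃o X) x₀)⟩
  have _ : MulRightMono Γ := mulRightMono_of_mulRightStrictMono Γ
  have archimedean : ∀ d : Γ, 1 < d → ∀ w : Γ, ∃ n : ℕ, w ≤ d ^ n := by
    intro d hd w
    have hne : ∀ x, (d : X ≃o X) x ≠ x := fun x hx ↦
      hd.ne' (Subtype.ext (hfree d d.2 x hx))
    exact (exists_lt_pow_apply hne hd ((w : X ≃o X) x₀)).imp fun n hn ↦ hn.le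
  exact congrArg Subtype.val (commute_of_forall_exists_le_pow archimedean ⟨u, hu⟩ ⟨v, hv⟩).eq

theorem apply_comm_of_free_on_Ioo {a b : X}
    (hfree : ∀ u ∈ Γ, ∀ x ∈ Ioo a b, u x = x → ∀ y ∈ Ioo a b, u y = y) {u v : X ≃o X}
    (hu : u ∈ Γ) (hv : v ∈ Γ) (hua : u a = a) (hub : u b = b) (hva : v a = a) (hvb : v b = b)
    {x : X} (hx : x ∈ Ioo a b) : u (v x) = v (u x) := by
  have _ : Inhabited (Ioo a b) := ⟨⟨x, hx⟩⟩
  have free : ∀ w ∈ restrictionGroup Γ (Ioo a b), ∀ y, w y = y → w = 1 := by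
    rintro w ⟨u, hu, hwu⟩ y hy
    refine RelIso.ext fun z ↦ Subtype.ext ((hwu z).trans ?_)
    exact hfree u hu y y.2 (by rw [← hwu, hy]) z z.2
  have hcomm : Commute (restrictIoo u hua hub) (restrictIoo v hva hvb) :=
    commute_of_free free ⟨u, hu, fun _ ↦ rfl⟩ ⟨v, hv, fun _ ↦ rfl⟩
  exact congrArg Subtype.val (DFunLike.congr_fun hcomm.eq ⟨x, hx⟩)

end FreeAction

section Orbits

theorem tendsto_iterate_of_map_lt {f : ℝ → ℝ} {a b c : ℝ} (hf : Continuous f) (hfm : Monotone f)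
    (ha : f a = a) (hlt : ∀ x ∈ Ioo a b, f x < x) (hc : c ∈ Ico a b) :
    Tendsto (fun n ↦ f^[n] c) atTop (𝓝 a) := by
  have hle : f c ≤ c := by
    rcases hc.1.eq_or_lt with rfl | hac
    exacts [ha.le, (hlt c ⟨hac, hc.2⟩).le]
  have hlow : ∀ n, a ≤ f^[n] c := fun n ↦ by
    simpa only [Function.iterate_fixed ha] using hfm.iterate n hc.1
  have hbdd : BddBelow (range fun n ↦ f^[n] c) := ⟨a, forall_mem_range.2 hlow⟩
  have hlim := tendsto_atTop_ciInf (hfm.antitone_iterate_of_map_le hle) hbdd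
  have hfix : f (⨅ n, f^[n] c) = ⨅ n, f^[n] c := isFixedPt_of_tendsto_iterate hlim hf.continuousAt
  rcases (le_ciInf hlow).eq_or_lt with heq | hgt
  · rwa [← heq] at hlim
  · exact absurd hfix (hlt _ ⟨hgt, (ciInf_le hbdd 0).trans_lt hc.2⟩).ne

theorem hasDerivAt_iterate {𝕜 : Type*} [NontriviallyNormedField 𝕜] {f : 𝕜 → 𝕜}
    (hf : Differentiable 𝕜 f) (n : ℕ) (x : 𝕜) :
    HasDerivAt f^[n] (∏ i ∈ Finset.range n, deriv f (f^[i] x)) x := by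
  induction n with
  | zero => simpa using hasDerivAt_id x
  | succ n ih =>
    rw [Function.iterate_succ', Finset.prod_range_succ, mul_comm]
    exact (hf (f^[n] x)).hasDerivAt.comp x ih

theorem contDiff_iterate {𝕜 E : Type*} [NontriviallyNormedField 𝕜] [NormedAddCommGroup E]
    [NormedSpace 𝕜 E] {n : WithTop ℕ∞} {g : E → E} (hg : ContDiff 𝕜 n g) (k : ℕ) :
    ContDiff 𝕜 n g^[k] :=
  k.rec contDiff_id fun _ ih ↦ ih.comp hg

theorem deriv_mul_deriv_of_commute {𝕜 : Type*} [NontriviallyNormedField 𝕜] {f h : 𝕜 → 𝕜}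
    (hf : Differentiable 𝕜 f) (hh : Differentiable 𝕜 h) (hcomm : Function.Commute f h) (x : 𝕜) :
    deriv f (h x) * deriv h x = deriv h (f x) * deriv f x := by
  rw [← deriv_comp x (hf _) (hh x), ← deriv_comp x (hh _) (hf x), hcomm.comp_eq]

theorem eq_one_of_hasDerivAt_of_frequently_fixed {𝕜 : Type*} [NontriviallyNormedField 𝕜]
    {g : 𝕜 → 𝕜} {g' a : 𝕜} (hg : HasDerivAt g g' a) (hfix : ∃ᶠ x in 𝓝[≠] a, g x = x) :
    g' = 1 := by
  by_contra hne
  refine hfix (((hg.sub (hasDerivAt_id a)).eventually_ne (sub_ne_zero.2 hne) (c := 0)).mono ?_)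
  exact fun x hx hgx ↦ hx (sub_eq_zero.2 hgx)

end Orbits

section Kopell

variable {f : ℝ → ℝ} {a b c : ℝ}

theorem abs_iterate_sub_iterate_le (hf : Monotone f) {x y : ℝ} (hx : x ∈ Icc (f c) c)
    (hy : y ∈ Icc (f c) c) (n : ℕ) : |f^[n] y - f^[n] x| ≤ f^[n] c - f^[n + 1] c := by
  have hmem : ∀ z ∈ Icc (f c) c, f^[n] z ∈ Icc (f^[n + 1] c) (f^[n] c) := fun z hz ↦
    ⟨by simpa only [Function.iterate_succ_apply] using hf.iterate n hz.1, hf.iterate n hz.2⟩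
  exact abs_sub_le_of_le_of_le (hmem y hy).1 (hmem y hy).2 (hmem x hx).1 (hmem x hx).2

theorem sum_sub_sum_iterate_le {φ : ℝ → ℝ} {K : NNReal} (hφ : LipschitzOnWith K φ (Icc a c))
    (hf : Monotone f) (ha : f a = a) (hac : a ≤ c) (hc : f c ≤ c) {x y : ℝ}
    (hx : x ∈ Icc (f c) c) (hy : y ∈ Icc (f c) c) (n : ℕ) :
    ∑ i ∈ Finset.range n, φ (f^[i] y) - ∑ i ∈ Finset.range n, φ (f^[i] x) ≤ K * (c - a) := by
  have hlow : ∀ n, ∀ z, a ≤ z → a ≤ f^[n] z := fun n z hz ↦ by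
    simpa only [Function.iterate_fixed ha] using hf.iterate n hz
  have hfac : a ≤ f c := hlow 1 c hac
  have hmem : ∀ z ∈ Icc (f c) c, ∀ i, f^[i] z ∈ Icc a c := fun z hz i ↦
    ⟨hlow i z (hfac.trans hz.1),
      (hf.iterate i hz.2).trans (hf.antitone_iterate_of_map_le hc (Nat.zero_le i))⟩
  calc ∑ i ∈ Finset.range n, φ (f^[i] y) - ∑ i ∈ Finset.range n, φ (f^[i] x)
      = ∑ i ∈ Finset.range n, (φ (f^[i] y) - φ (f^[i] x)) := (Finset.sum_sub_distrib _ _).symm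
    _ ≤ ∑ i ∈ Finset.range n, K * (f^[i] c - f^[i + 1] c) := by
        refine Finset.sum_le_sum fun i _ ↦ (le_abs_self _).trans ?_
        refine (hφ.dist_le_mul _ (hmem y hy i) _ (hmem x hx i)).trans ?_
        exact mul_le_mul_of_nonneg_left (abs_iterate_sub_iterate_le hf hx hy i) K.2
    _ = K * (c - f^[n] c) := by
        rw [← Finset.mul_sum, Finset.sum_range_sub' fun i ↦ f^[i] c, Function.iterate_zero_apply]
    _ ≤ K * (c - a) := by gcongr; exact hlow n c hac

theorem contDiff_log_deriv (hf : ContDiff ℝ 2 f) (hne : ∀ x, deriv f x ≠ 0) :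
    ContDiff ℝ 1 fun x ↦ Real.log (deriv f x) :=
  ((contDiff_succ_iff_deriv (n := 1)).1 hf).2.2.log hne

/-- Bounded distortion: the intervals `[f^[i + 1] c, f^[i] c]` do not overlap, so their total length
is at most `c - a` and the variation of `log (deriv f^[n])` on `[f c, c]` is bounded uniformly
in `n`. -/
theorem exists_mul_deriv_iterate_le (hf : ContDiff ℝ 2 f) (hf' : ∀ x, 0 < deriv f x)
    (ha : f a = a) (hac : a ≤ c) (hc : f c ≤ c) :
    ∃ C > 0, ∀ x ∈ Icc (f c) c, ∀ y ∈ Icc (f c) c, ∀ n,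
      C * deriv f^[n] y ≤ deriv f^[n] x := by
  obtain ⟨K, hK⟩ := (contDiff_log_deriv hf fun x ↦ (hf' x).ne').contDiffOn.exists_lipschitzOnWith
    one_ne_zero (convex_Icc a c) isCompact_Icc
  have hderiv : ∀ n z, deriv f^[n] z
      = Real.exp (∑ i ∈ Finset.range n, Real.log (deriv f (f^[i] z))) := fun n z ↦ by
    rw [(hasDerivAt_iterate (hf.differentiable two_ne_zero) n z).deriv, Real.exp_sum]
    exact Finset.prod_congr rfl fun i _ ↦ (Real.exp_log (hf' _)).symm
  refine ⟨Real.exp (-(K * (c - a))), Real.exp_pos _, fun x hx y hy n ↦ ?_⟩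
  rw [hderiv, hderiv, ← Real.exp_add, Real.exp_le_exp]
  linarith [sum_sub_sum_iterate_le hK (strictMono_of_deriv_pos hf').monotone ha hac hc hx hy n]

theorem tendsto_iterate_of_mem_Icc (hf : Monotone f)
    (hc : Tendsto (fun n ↦ f^[n] c) atTop (𝓝 a)) {x : ℝ} (hx : x ∈ Icc (f c) c) :
    Tendsto (fun n ↦ f^[n] x) atTop (𝓝 a) :=
  tendsto_of_tendsto_of_tendsto_of_le_of_le ((tendsto_add_atTop_iff_nat 1).2 hc) hc
    (fun n ↦ by simpa only [Function.iterate_succ_apply] using hf.iterate n hx.1)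
    (fun n ↦ hf.iterate n hx.2)

/-- Differentiate `f^[n] ∘ h = h ∘ f^[n]` and let `n` tend to infinity, where `deriv h (f^[n] x)`
tends to `deriv h a = 1`. -/
theorem exists_le_deriv_of_commute (hf : ContDiff ℝ 2 f) (hf' : ∀ x, 0 < deriv f x)
    (ha : f a = a) (hlt : ∀ x ∈ Ioo a b, f x < x) (hc : c ∈ Ioo a b) :
    ∃ C > 0, ∀ h : ℝ → ℝ, ContDiff ℝ 1 h → Monotone h → Function.Commute f h →
      MapsTo h (Icc (f c) c) (Icc (f c) c) → deriv h a = 1 →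
      ∀ x ∈ Icc (f c) c, C ≤ deriv h x := by
  obtain ⟨C, hC, hdist⟩ := exists_mul_deriv_iterate_le hf hf' ha hc.1.le (hlt c hc).le
  refine ⟨C, hC, fun h hh hhm hcomm hmaps hha x hx ↦ ?_⟩
  have hfm : Monotone f := (strictMono_of_deriv_pos hf').monotone
  have hfd : Differentiable ℝ f := hf.differentiable two_ne_zero
  have hpos : ∀ n z, 0 < deriv f^[n] z := fun n z ↦ by
    rw [(hasDerivAt_iterate hfd n z).deriv]
    exact Finset.prod_pos fun i _ ↦ hf' _
  have hlim : Tendsto (fun n ↦ deriv h (f^[n] x) * C) atTop (𝓝 C) := by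
    have hfx := tendsto_iterate_of_mem_Icc hfm
      (tendsto_iterate_of_map_lt hf.continuous hfm ha hlt (Ioo_subset_Ico_self hc)) hx
    simpa only [hha, one_mul, Function.comp_def] using
      (((hh.continuous_deriv le_rfl).tendsto a).comp hfx).mul_const C
  refine le_of_tendsto' hlim fun n ↦ le_of_mul_le_mul_left ?_ (hpos n (h x))
  calc deriv f^[n] (h x) * (deriv h (f^[n] x) * C)
      = deriv h (f^[n] x) * (C * deriv f^[n] (h x)) := by ring
    _ ≤ deriv h (f^[n] x) * deriv f^[n] x :=
        mul_le_mul_of_nonneg_left (hdist x hx (h x) (hmaps hx) n) hhm.deriv_nonneg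
    _ = deriv f^[n] (h x) * deriv h x := (deriv_mul_deriv_of_commute (hfd.iterate n)
        (hh.differentiable one_ne_zero) (hcomm.iterate_left n) x).symm

theorem abs_sub_mul_le_of_le_deriv {h : ℝ → ℝ} {s : Set ℝ} {C : ℝ} (hs : Convex ℝ s)
    (hh : Differentiable ℝ h) (hC : ∀ x ∈ s, C ≤ deriv h x) {x y : ℝ} (hx : x ∈ s) (hy : y ∈ s) :
    C * |y - x| ≤ |h y - h x| := by
  wlog hxy : x ≤ y generalizing x y
  · rw [abs_sub_comm, abs_sub_comm (h y)]
    exact this hy hx (le_of_not_ge hxy)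
  rw [abs_of_nonneg (sub_nonneg.2 hxy)]
  exact (hs.mul_sub_le_image_sub_of_le_deriv hh.continuous.continuousOn hh.differentiableOn
    (fun z hz ↦ hC z (interior_subset hz)) x hx y hy hxy).trans (le_abs_self _)

theorem eq_self_of_forall_mul_abs_sub_le_iterate {g : ℝ → ℝ} {p q C : ℝ} (hg : Monotone g)
    (hmaps : MapsTo g (Icc p q) (Icc p q)) (hC : 0 < C)
    (hexp : ∀ k, ∀ x ∈ Icc p q, ∀ y ∈ Icc p q, C * |y - x| ≤ |g^[k] y - g^[k] x|)
    {x : ℝ} (hx : x ∈ Icc p q) : g x = x := by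
  obtain ⟨L, hL⟩ : ∃ L, Tendsto (fun k ↦ g^[k] x) atTop (𝓝 L) := by
    rcases le_total (g x) x with hle | hle
    · exact ⟨_, tendsto_atTop_ciInf (hg.antitone_iterate_of_map_le hle)
        ⟨p, forall_mem_range.2 fun k ↦ (hmaps.iterate k hx).1⟩⟩
    · exact ⟨_, tendsto_atTop_ciSup (hg.monotone_iterate_of_le_map hle)
        ⟨q, forall_mem_range.2 fun k ↦ (hmaps.iterate k hx).2⟩⟩
  have hzero : Tendsto (fun k ↦ |g^[k] (g x) - g^[k] x|) atTop (𝓝 0) := by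
    simpa [Function.iterate_succ_apply] using (((tendsto_add_atTop_iff_nat 1).2 hL).sub hL).abs
  have hle : C * |g x - x| ≤ 0 := ge_of_tendsto' hzero fun k ↦ hexp k x hx (g x) (hmaps hx)
  have habs : |g x - x| ≤ 0 := nonpos_of_mul_nonpos_right hle hC
  exact sub_eq_zero.1 (abs_nonpos_iff.1 habs)

/-- Each iterate `g^[k]` commutes with `f` and has derivative `1` at `a`, so it shrinks distances on
the fundamental domain `[f c, c]` at most by a factor independent of `k`. -/
theorem eqOn_id_of_commute_of_fixed {g : ℝ → ℝ} (hf : ContDiff ℝ 2 f) (hf' : ∀ x, 0 < deriv f x)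
    (ha : f a = a) (hlt : ∀ x ∈ Ioo a b, f x < x) (hg : ContDiff ℝ 1 g) (hgm : Monotone g)
    (hcomm : Function.Commute f g) (hc : c ∈ Ioo a b) (hgc : g c = c) :
    EqOn g id (Icc (f c) c) := by
  have hfm : StrictMono f := strictMono_of_deriv_pos hf'
  have hlim : Tendsto (fun n ↦ f^[n] c) atTop (𝓝 a) :=
    tendsto_iterate_of_map_lt hf.continuous hfm.monotone ha hlt (Ioo_subset_Ico_self hc)
  have hfixed : ∀ n, g (f^[n] c) = f^[n] c := fun n ↦ by
    rw [← (hcomm.iterate_left n).eq, hgc]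
  have hga : g a = a := tendsto_nhds_unique
    ((hg.continuous.tendsto a).comp hlim) (by simpa only [Function.comp_def, hfixed] using hlim)
  have hne : ∀ n, f^[n] c ≠ a := fun n ↦ by
    have := hfm.iterate n hc.1
    rw [Function.iterate_fixed ha] at this
    exact this.ne'
  have hderiv : HasDerivAt g 1 a := by
    have hg' := (hg.differentiable one_ne_zero a).hasDerivAt
    have hlim' : Tendsto (fun n ↦ f^[n] c) atTop (𝓝[≠] a) :=
      tendsto_nhdsWithin_iff.2 ⟨hlim, .of_forall hne⟩
    rwa [eq_one_of_hasDerivAt_of_frequently_fixed hg' (hlim'.frequently (.of_forall hfixed))] at hg'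
  have hmaps : MapsTo g (Icc (f c) c) (Icc (f c) c) := fun x hx ↦
    ⟨(hfixed 1).ge.trans (hgm hx.1), (hgm hx.2).trans hgc.le⟩
  obtain ⟨C, hC, hle⟩ := exists_le_deriv_of_commute hf hf' ha hlt hc
  refine fun x hx ↦ eq_self_of_forall_mul_abs_sub_le_iterate hgm hmaps hC (fun k x hx y hy ↦ ?_) hx
  have hgk : ContDiff ℝ 1 g^[k] := contDiff_iterate hg k
  refine abs_sub_mul_le_of_le_deriv (convex_Icc _ _) (hgk.differentiable one_ne_zero) ?_ hx hy
  exact hle _ hgk (hgm.iterate k) (hcomm.iterate_right k) (hmaps.iterate k)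
    (by simpa only [one_pow] using (hderiv.iterate a hga k).deriv)

theorem eqOn_id_Ioo_of_commute_of_fixed {g : ℝ → ℝ} (hf : ContDiff ℝ 2 f)
    (hf' : ∀ x, 0 < deriv f x) (ha : f a = a) (hlt : ∀ x ∈ Ioo a b, f x < x)
    (hg : ContDiff ℝ 1 g) (hgm : Monotone g) (hcomm : Function.Commute f g) (hc : c ∈ Ioo a b)
    (hgc : g c = c) : EqOn g id (Ioo a b) := by
  have hfm : StrictMono f := strictMono_of_deriv_pos hf'
  have hlim : ∀ x ∈ Ioo a b, Tendsto (fun n ↦ f^[n] x) atTop (𝓝 a) := fun x hx ↦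
    tendsto_iterate_of_map_lt hf.continuous hfm.monotone ha hlt (Ioo_subset_Ico_self hx)
  have hmaps : MapsTo f (Ioo a b) (Ioo a b) := fun x hx ↦
    ⟨by simpa only [ha] using hfm hx.1, (hlt x hx).trans hx.2⟩
  have below : ∀ x ∈ Ioo a b, x < c → g x = x := by
    intro x hx hxc
    obtain ⟨n, hn, hn'⟩ : ∃ n, ¬ f^[n] c < x ∧ f^[n + 1] c < x :=
      Nat.exists_not_and_succ_of_not_zero_of_exists hxc.not_gt
        ((hlim c hc).eventually_lt_const hx.1).exists
    rw [Function.iterate_succ_apply'] at hn'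
    exact eqOn_id_of_commute_of_fixed hf hf' ha hlt hg hgm hcomm (hmaps.iterate n hc)
      (by rw [← (hcomm.iterate_left n).eq, hgc]) ⟨hn'.le, not_lt.1 hn⟩
  intro x hx
  obtain ⟨n, hn⟩ := ((hlim x hx).eventually_lt_const hc.1).exists
  refine (hfm.injective.iterate n) ?_
  rw [(hcomm.iterate_left n).eq, below _ (hmaps.iterate n hx) hn, id]

end Kopell

section LineDiffeo

/-- The group of orientation-preserving `C^n` diffeomorphisms of the line, as order automorphisms
which are `C^n` together with their inverse. -/
def lineDiffeo (n : WithTop ℕ∞) : Subgroup (ℝ ≃o ℝ) where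
  carrier := {u | ContDiff ℝ n u ∧ ContDiff ℝ n u.symm}
  one_mem' := ⟨contDiff_id, contDiff_id⟩
  mul_mem' := fun hu hv ↦ ⟨hu.1.comp hv.1, hv.2.comp hu.2⟩
  inv_mem' := And.symm

theorem lineDiffeo_anti {m n : WithTop ℕ∞} (h : m ≤ n) : lineDiffeo n ≤ lineDiffeo m :=
  fun _ hu ↦ ⟨hu.1.of_le h, hu.2.of_le h⟩

theorem deriv_pos_of_mem_lineDiffeo {n : WithTop ℕ∞} (hn : n ≠ 0) {u : ℝ ≃o ℝ}
    (hu : u ∈ lineDiffeo n) (x : ℝ) : 0 < deriv u x := by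
  refine u.monotone.deriv_nonneg.lt_of_ne' fun hzero ↦ ?_
  have hid := (hu.2.differentiable hn (u x)).hasDerivAt.comp x
    (hu.1.differentiable hn x).hasDerivAt
  rw [hzero, mul_zero, show u.symm ∘ u = id from funext u.symm_apply_apply] at hid
  exact zero_ne_one (hid.unique (hasDerivAt_id x))

theorem mem_lineDiffeo_of_deriv_ne_zero {n : WithTop ℕ∞} (hn : n ≠ 0) {u : ℝ ≃o ℝ}
    (hu : ContDiff ℝ n u) (hu' : ∀ x, deriv u x ≠ 0) : u ∈ lineDiffeo n :=
  ⟨hu, u.toHomeomorph.contDiff_symm_deriv hu' (fun x ↦ (hu.differentiable hn x).hasDerivAt) hu⟩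

theorem forall_map_lt_or_forall_lt_map {f : ℝ → ℝ} {s : Set ℝ} (hs : IsPreconnected s)
    (hf : ContinuousOn f s) (hne : ∀ x ∈ s, f x ≠ x) :
    (∀ x ∈ s, f x < x) ∨ ∀ x ∈ s, x < f x := by
  by_contra! h
  obtain ⟨⟨x, hx, hxf⟩, y, hy, hyf⟩ := h
  obtain ⟨z, hz, hfz⟩ := hs.intermediate_value₂ hy hx hf continuousOn_id hyf hxf
  exact hne z hz hfz

/-- Kopell's lemma. -/
theorem eqOn_id_of_commute_of_forall_apply_ne {f : ℝ ≃o ℝ} {g : ℝ → ℝ} {a b c : ℝ}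
    (hf : f ∈ lineDiffeo 2) (ha : f a = a) (hne : ∀ x ∈ Ioo a b, f x ≠ x) (hg : ContDiff ℝ 1 g)
    (hgm : Monotone g) (hcomm : Function.Commute f g) (hc : c ∈ Ioo a b) (hgc : g c = c) :
    EqOn g id (Ioo a b) := by
  rcases forall_map_lt_or_forall_lt_map isPreconnected_Ioo f.continuous.continuousOn hne with
    hlt | hgt
  · exact eqOn_id_Ioo_of_commute_of_fixed hf.1 (deriv_pos_of_mem_lineDiffeo two_ne_zero hf) ha hlt
      hg hgm hcomm hc hgc
  · have hf' : f⁻¹ ∈ lineDiffeo 2 := inv_mem hf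
    have hcomm' : Function.Commute ⇑f⁻¹ g := fun x ↦ f.injective <| by
      rw [RelIso.apply_inv_self, hcomm.eq, RelIso.apply_inv_self]
    refine eqOn_id_Ioo_of_commute_of_fixed hf'.1 (deriv_pos_of_mem_lineDiffeo two_ne_zero hf')
      (f.symm_apply_eq.2 ha.symm) (fun x hx ↦ ?_) hg hgm hcomm' hc hgc
    exact f.symm_apply_lt.2 (hgt x hx)

end LineDiffeo

section Line

/-- The fixed points of `F` are unbounded in both directions, so that the complement of the fixed
point set has bounded components only. -/
def HasUnboundedFixedPoints (F : ℝ → ℝ) : Prop :=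
  ¬ BddBelow (Function.fixedPoints F) ∧ ¬ BddAbove (Function.fixedPoints F)

theorem exists_gap_of_isClosed {X : Type*} [ConditionallyCompleteLinearOrder X]
    [TopologicalSpace X] [OrderTopology X] {s : Set X} (hs : IsClosed s) {x : X} (hx : x ∉ s)
    (hlow : (s ∩ Iic x).Nonempty) (hup : (s ∩ Ici x).Nonempty) :
    ∃ a ∈ s, ∃ b ∈ s, x ∈ Ioo a b ∧ ∀ y ∈ Ioo a b, y ∉ s := by
  have ha := (hs.inter isClosed_Iic).isGreatest_csSup hlow ⟨x, fun _ hy ↦ hy.2⟩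
  have hb := (hs.inter isClosed_Ici).isLeast_csInf hup ⟨x, fun _ hy ↦ hy.2⟩
  refine ⟨_, ha.1.1, _, hb.1.1, ⟨ha.1.2.lt_of_ne ?_, hb.1.2.lt_of_ne' ?_⟩, fun y hy hys ↦ ?_⟩
  · exact ne_of_mem_of_not_mem ha.1.1 hx
  · exact ne_of_mem_of_not_mem hb.1.1 hx
  · rcases le_total y x with hyx | hxy
    · exact (ha.2 ⟨hys, hyx⟩).not_gt hy.1
    · exact (hb.2 ⟨hys, hxy⟩).not_gt hy.2

theorem HasUnboundedFixedPoints.exists_gap {F : ℝ → ℝ} (h : HasUnboundedFixedPoints F)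
    (hF : Continuous F) {x : ℝ} (hx : F x ≠ x) :
    ∃ a b, F a = a ∧ F b = b ∧ x ∈ Ioo a b ∧ ∀ y ∈ Ioo a b, F y ≠ y := by
  obtain ⟨l, hl, hlx⟩ := not_bddBelow_iff.1 h.1 x
  obtain ⟨r, hr, hxr⟩ := not_bddAbove_iff.1 h.2 x
  obtain ⟨a, ha, b, hb, hxab, hgap⟩ := exists_gap_of_isClosed (isClosed_fixedPoints hF) hx
    ⟨l, hl, hlx.le⟩ ⟨r, hr, hxr.le⟩
  exact ⟨a, b, ha, hb, hxab, hgap⟩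

theorem functionCommute_of_commute {X : Type*} [LE X] {F G : X ≃o X} (h : Commute F G) :
    Function.Commute F G :=
  DFunLike.congr_fun h.eq

variable {F G H : ℝ ≃o ℝ}

theorem fixedPoints_subset_of_commute (hF : F ∈ lineDiffeo 2) (hG : G ∈ lineDiffeo 1)
    (hFunb : HasUnboundedFixedPoints F) (hGint : interior (Function.fixedPoints G) = ∅)
    (hcomm : Commute F G) : Function.fixedPoints G ⊆ Function.fixedPoints F := by
  intro x hGx
  by_contra hFx
  obtain ⟨a, b, ha, -, hxab, hgap⟩ := hFunb.exists_gap F.continuous hFx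
  have hid : Ioo a b ⊆ Function.fixedPoints G :=
    eqOn_id_of_commute_of_forall_apply_ne hF ha hgap hG.1 G.monotone
      (functionCommute_of_commute hcomm) hxab hGx
  have hint : x ∈ interior (Function.fixedPoints G) := interior_maximal hid isOpen_Ioo hxab
  rwa [hGint] at hint

theorem apply_comm_of_gap (hG : G ∈ lineDiffeo 2) {a b : ℝ} (ha : G a = a)
    (hgap : ∀ y ∈ Ioo a b, G y ≠ y) (hF : F ∈ lineDiffeo 1) (hH : H ∈ lineDiffeo 1)
    (hFG : Commute F G) (hGH : Commute G H) (hFa : F a = a) (hFb : F b = b) (hHa : H a = a)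
    (hHb : H b = b) {x : ℝ} (hx : x ∈ Ioo a b) : F (H x) = H (F x) := by
  let Γ : Subgroup (ℝ ≃o ℝ) := lineDiffeo 1 ⊓ Subgroup.centralizer {G}
  have free : ∀ u ∈ Γ, ∀ x ∈ Ioo a b, u x = x → ∀ y ∈ Ioo a b, u y = y := fun u hu x hx hux ↦
    have hcomm : Commute u G := Subgroup.mem_centralizer_singleton_iff.1 hu.2
    eqOn_id_of_commute_of_forall_apply_ne hG ha hgap hu.1.1 u.monotone
      (functionCommute_of_commute hcomm.symm) hx hux
  exact apply_comm_of_free_on_Ioo free ⟨hF, Subgroup.mem_centralizer_singleton_iff.2 hFG⟩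
    ⟨hH, Subgroup.mem_centralizer_singleton_iff.2 hGH.symm⟩ hFa hFb hHa hHb hx

theorem commute_of_commute_of_commute (hF : F ∈ lineDiffeo 2) (hG : G ∈ lineDiffeo 2)
    (hH : H ∈ lineDiffeo 2) (hFunb : HasUnboundedFixedPoints F)
    (hGunb : HasUnboundedFixedPoints G) (hHunb : HasUnboundedFixedPoints H)
    (hGint : interior (Function.fixedPoints G) = ∅) (hFG : Commute F G) (hGH : Commute G H) :
    Commute F H := by
  have hle : lineDiffeo 2 ≤ lineDiffeo 1 := lineDiffeo_anti one_le_two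
  have hGF : ∀ x, G x = x → F x = x :=
    fixedPoints_subset_of_commute hF (hle hG) hFunb hGint hFG
  have hGH' : ∀ x, G x = x → H x = x :=
    fixedPoints_subset_of_commute hH (hle hG) hHunb hGint hGH.symm
  refine RelIso.ext fun x ↦ ?_
  change F (H x) = H (F x)
  by_cases hx : G x = x
  · rw [hGH' x hx, hGF x hx, hGH' x hx]
  · obtain ⟨a, b, ha, hb, hxab, hgap⟩ := hGunb.exists_gap G.continuous hx
    exact apply_comm_of_gap hG ha hgap (hle hF) (hle hH) hFG hGH (hGF a ha) (hGF b hb)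
      (hGH' a ha) (hGH' b hb) hxab

end Line

section Circle

/-- `F` is a lift of the circle map `f` to the line which has a fixed point; such a lift is
unique, which makes lifting compatible with composition. -/
structure IsFixedLift (f : AddCircle (1 : ℝ) → AddCircle (1 : ℝ)) (F : ℝ ≃o ℝ) : Prop where
  apply_coe : ∀ x : ℝ, f x = F x
  map_add_one : ∀ x, F (x + 1) = F x + 1
  exists_fixed : ∃ p, F p = p

namespace IsFixedLift

variable {f g : AddCircle (1 : ℝ) → AddCircle (1 : ℝ)} {F G : ℝ ≃o ℝ}

theorem map_add_int (hF : IsFixedLift f F) (x : ℝ) (n : ℤ) : F (x + n) = F x + n :=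
  CircleDeg1Lift.map_add_int ⟨⟨F, F.monotone⟩, hF.map_add_one⟩ x n

theorem apply_mem_Ico (hF : IsFixedLift f F) {q x : ℝ} (hx : x ∈ Ico q (q + 1)) :
    F x ∈ Ico (F q) (F q + 1) :=
  ⟨F.monotone hx.1, hF.map_add_one q ▸ F.strictMono hx.2⟩

theorem exists_fixed_mem_Ico (hF : IsFixedLift f F) (x : ℝ) :
    ∃ q, F q = q ∧ x ∈ Ico q (q + 1) := by
  obtain ⟨p, hp⟩ := hF.exists_fixed
  refine ⟨p + ⌊x - p⌋, by rw [hF.map_add_int, hp], ?_, ?_⟩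
  · linarith [Int.floor_le (x - p)]
  · linarith [Int.lt_floor_add_one (x - p)]

theorem hasUnboundedFixedPoints (hF : IsFixedLift f F) : HasUnboundedFixedPoints F := by
  refine ⟨not_bddBelow_iff.2 fun x ↦ ?_, not_bddAbove_iff.2 fun x ↦ ?_⟩
  · obtain ⟨q, hq, hx⟩ := hF.exists_fixed_mem_Ico (x - 1)
    exact ⟨q, hq, by linarith [hx.1]⟩
  · obtain ⟨q, hq, hx⟩ := hF.exists_fixed_mem_Ico x
    exact ⟨q + 1, (hF.map_add_one q).trans (by rw [hq]), hx.2⟩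

theorem apply_eq_self_iff (hF : IsFixedLift f F) {x : ℝ} : F x = x ↔ f x = x := by
  obtain ⟨q, hq, hx⟩ := hF.exists_fixed_mem_Ico x
  have hFx : F x ∈ Ico q (q + 1) := by simpa only [hq] using hF.apply_mem_Ico hx
  rw [hF.apply_coe, AddCircle.coe_eq_coe_iff_of_mem_Ico hFx hx]

theorem interior_fixedPoints_eq_empty (hF : IsFixedLift f F)
    (hf : interior {p | f p = p} = ∅) : interior (Function.fixedPoints F) = ∅ := by
  have hpre : Function.fixedPoints F = ((↑) : ℝ → AddCircle (1 : ℝ)) ⁻¹' {p | f p = p} :=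
    ext fun _ ↦ hF.apply_eq_self_iff
  have hopen : IsOpenMap ((↑) : ℝ → AddCircle (1 : ℝ)) := QuotientAddGroup.isOpenMap_coe
  rw [hpre, ← hopen.preimage_interior_eq_interior_preimage (AddCircle.continuous_mk' 1), hf,
    preimage_empty]

theorem commute_iff {f g : Equiv.Perm (AddCircle (1 : ℝ))} (hF : IsFixedLift f F)
    (hG : IsFixedLift g G) : Commute F G ↔ Commute f g := by
  have hfg : ∀ x : ℝ, f (g x) = F (G x) := fun x ↦ by rw [hG.apply_coe, hF.apply_coe]
  have hgf : ∀ x : ℝ, g (f x) = G (F x) := fun x ↦ by rw [hF.apply_coe, hG.apply_coe]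
  constructor
  · intro hcomm
    refine Equiv.ext fun p ↦ ?_
    induction p using QuotientAddGroup.induction_on with | _ x
    exact (hfg x).trans ((congrArg _ (DFunLike.congr_fun hcomm.eq x)).trans (hgf x).symm)
  · intro hcomm
    have hcoe : ∀ x : ℝ, f (g x) = g (f x) := fun x ↦ DFunLike.congr_fun hcomm.eq _
    refine RelIso.ext fun x ↦ ?_
    obtain ⟨q, hq, hx⟩ := hG.exists_fixed_mem_Ico x
    have hGFq : G (F q) = F q := hG.apply_eq_self_iff.2 <| by
      rw [← hF.apply_coe, ← hcoe, hG.apply_eq_self_iff.1 hq]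
    have hFG : F (G x) ∈ Ico (F q) (F q + 1) := by
      simpa only [hq] using hF.apply_mem_Ico (hG.apply_mem_Ico hx)
    have hGF : G (F x) ∈ Ico (F q) (F q + 1) := by
      simpa only [hGFq] using hG.apply_mem_Ico (hF.apply_mem_Ico hx)
    exact (AddCircle.coe_eq_coe_iff_of_mem_Ico hFG hGF).1 (by rw [← hfg, hcoe, hgf])

end IsFixedLift

theorem exists_orderIso_coe_eq {F : ℝ → ℝ} (hF : Continuous F) (hmono : StrictMono F)
    (hadd : ∀ x, F (x + 1) = F x + 1) : ∃ u : ℝ ≃o ℝ, ⇑u = F := by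
  let lift : CircleDeg1Lift := ⟨⟨F, hmono.monotone⟩, hadd⟩
  exact ⟨hmono.orderIsoOfSurjective F (hF.surjective lift.tendsto_atTop lift.tendsto_atBot), rfl⟩

theorem IsDiffCircle.exists_isFixedLift {f : Equiv.Perm (AddCircle (1 : ℝ))}
    (hf : IsDiffCircle f) (hfix : ∃ p, f p = p) : ∃ F ∈ lineDiffeo 2, IsFixedLift f F := by
  obtain ⟨F₀, hF₀, hF₀', hadd, hcoe⟩ := hf
  obtain ⟨p, hp⟩ := hfix
  induction p using QuotientAddGroup.induction_on with | _ p
  obtain ⟨n, hn⟩ : ∃ n : ℤ, n • (1 : ℝ) = F₀ p - p := by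
    rw [← AddCircle.coe_eq_zero_iff, AddCircle.coe_sub, ← hcoe]
    exact sub_eq_zero.2 hp
  rw [zsmul_one] at hn
  have hderiv : ∀ x, 0 < deriv (fun y ↦ F₀ y - n) x := fun x ↦ by
    rw [deriv_sub_const]
    exact hF₀' x
  have hsmooth : ContDiff ℝ 2 fun x ↦ F₀ x - n := hF₀.sub contDiff_const
  have hadd' : ∀ x, F₀ (x + 1) - n = F₀ x - n + 1 := fun x ↦ by rw [hadd]; ring
  obtain ⟨F, hF⟩ := exists_orderIso_coe_eq hsmooth.continuous (strictMono_of_deriv_pos hderiv) hadd'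
  refine ⟨F, mem_lineDiffeo_of_deriv_ne_zero two_ne_zero (hF ▸ hsmooth)
    (hF ▸ fun x ↦ (hderiv x).ne'), fun x ↦ ?_, hF ▸ hadd', p, ?_⟩
  · have hn0 : ((n : ℝ) : AddCircle (1 : ℝ)) = 0 :=
      (AddCircle.coe_eq_zero_iff 1).2 ⟨n, zsmul_one n⟩
    rw [hF, AddCircle.coe_sub, hn0, sub_zero, hcoe]
  · rw [hF]
    linarith

end Circle

theorem abelian_criterion_circle_general {ι : Type*} (g : ι → Equiv.Perm (AddCircle (1 : ℝ)))
    (hdiff : ∀ i, IsDiffCircle (g i))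
    (hfix : ∀ i, ∃ p, g i p = p)
    (hfull : ∀ i, interior {p | g i p = p} = ∅)
    (hconn : ∀ i j : ι, Relation.ReflTransGen (fun a b => Commute (g a) (g b)) i j) :
    ∀ u ∈ Subgroup.closure (Set.range g), ∀ v ∈ Subgroup.closure (Set.range g),
      Commute u v := by
  choose F hF hlift using fun i ↦ (hdiff i).exists_isFixedLift (hfix i)
  have hunb : ∀ i, HasUnboundedFixedPoints (F i) := fun i ↦ (hlift i).hasUnboundedFixedPoints
  have hcomm : ∀ i j, Commute (F i) (F j) := by
    intro i j
    induction hconn i j with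
    | refl => exact Commute.refl _
    | @tail b c _ hbc ih =>
      exact commute_of_commute_of_commute (hF i) (hF b) (hF c) (hunb i) (hunb b) (hunb c)
        ((hlift b).interior_fixedPoints_eq_empty (hfull b)) ih
        (((hlift b).commute_iff (hlift c)).2 hbc)
  have hgen : ∀ u ∈ range g, ∀ v ∈ range g, u * v = v * u := by
    rintro _ ⟨i, rfl⟩ _ ⟨j, rfl⟩
    exact ((hlift i).commute_iff (hlift j)).1 (hcomm i j)
  have := Subgroup.isMulCommutative_closure hgen
  exact fun u hu v hv ↦ setLike_mul_comm hu hv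

/-- **Abelian criterion for the circle.** Let `g 1, …, g k` be orientation-preserving
C² diffeomorphisms of `S¹ = ℝ/ℤ`, each fully supported (fixed point set with empty
interior) and each having at least one fixed point.  If the commutativity graph of the
generators is connected (any two indices are joined by a chain of commuting pairs),
then the group they generate is abelian. -/
theorem abelian_criterion_circle {k : ℕ} (g : Fin k → Equiv.Perm (AddCircle (1 : ℝ)))
    (hdiff : ∀ i, IsDiffCircle (g i))
    (hfix : ∀ i, ∃ p, g i p = p)
    (hfull : ∀ i, interior {p | g i p = p} = ∅)
    (hconn : ∀ i j : Fin k, Relation.ReflTransGen (fun a b => Commute (g a) (g b)) i j) :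
    ∀ u ∈ Subgroup.closure (Set.range g), ∀ v ∈ Subgroup.closure (Set.range g),
      Commute u v :=
  abelian_criterion_circle_general g hdiff hfix hfull hconn
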